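/- arXiv:1412.3775 — 6 statements merged into one kernel-verified Lean document; each statement's English description precedes it below -/
import Mathlib

section
/- For every μ ∈ [0, 1/2), the orthogonal 2×2 matrix C whose columns are v₂ and v₁ (in that order) has determinant 1; equivalently, v₂₁·v₁₂ − v₁₁·v₂₂ = 1 where v₁ = (v₁₁, v₁₂) and v₂ = (v₂₁, v₂₂). Consequently C is a rotation, and the linear change of variables z = Cw conjugates the 2×2 symplectic matrix J₂ = [[0,1],[−1,0]] to itself: C⁻¹J₂C = J₂, so the change of coordinates is symplectic. -/
/-!
Since `4 * d ^ 2 - 1 = 3 * (1 - 2 * μ) ^ 2`, the numbers `x = (1 + 2 * d) / (1 - 2 * μ)` and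
`y = (1 - 2 * d) / (1 - 2 * μ)` satisfy `x * y = -3`: this is the orthogonality of the eigenvectors
`v₁ ∥ (-x, √3)` and `v₂ ∥ (-y, √3)`. As `0 < x`, the quarter turn of `v₂` is `v₁` rather than `-v₁`,
so `C` is a rotation. In dimension two `Cᵀ * J * C = C.det • J` for every `C`, hence rotations
preserve `J`.
-/

open Matrix Real

section SymplecticForm

variable {R : Type*} [CommRing R]

lemma transpose_mul_symplectic_mul_fin_two (C : Matrix (Fin 2) (Fin 2) R) :
    Cᵀ * !![0, 1; -1, 0] * C = C.det • !![0, 1; -1, 0] := by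
  ext i j
  fin_cases i <;> fin_cases j <;> simp [Matrix.mul_apply, det_fin_two] <;> ring

lemma inv_mul_symplectic_mul_of_mem_specialOrthogonalGroup {C : Matrix (Fin 2) (Fin 2) R}
    (hC : C ∈ specialOrthogonalGroup (Fin 2) R) :
    C⁻¹ * !![0, 1; -1, 0] * C = !![0, 1; -1, 0] := by
  obtain ⟨horth, hdet⟩ := mem_specialOrthogonalGroup_iff.mp hC
  rw [inv_eq_left_inv ((mem_orthogonalGroup_iff' _ _).mp horth),
    transpose_mul_symplectic_mul_fin_two, hdet, one_smul]

end SymplecticForm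

section OrthogonalColumns

variable {c x y : ℝ}

lemma sqrt_sq_add_sq_of_mul_eq_neg_sq (hc : 0 ≤ c) (hx : 0 < x) (hxy : x * y = -c ^ 2) :
    √(c ^ 2 + y ^ 2) = c / x * √(c ^ 2 + x ^ 2) := by
  have hy : y = -c ^ 2 / x := eq_div_of_mul_eq hx.ne' (by rw [mul_comm, hxy])
  have hsq : c ^ 2 + y ^ 2 = (c / x) ^ 2 * (c ^ 2 + x ^ 2) := by
    rw [hy]
    field_simp
    ring
  rw [hsq, sqrt_mul (sq_nonneg _), sqrt_sq (by positivity)]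

lemma normalized_columns_mem_specialOrthogonalGroup (hc : 0 < c) (hx : 0 < x)
    (hxy : x * y = -c ^ 2) :
    !![-(y / √(c ^ 2 + y ^ 2)), -(x / √(c ^ 2 + x ^ 2));
       c / √(c ^ 2 + y ^ 2), c / √(c ^ 2 + x ^ 2)] ∈ specialOrthogonalGroup (Fin 2) ℝ := by
  have hsqrt := sqrt_sq_add_sq_of_mul_eq_neg_sq hc.le hx hxy
  have hdiag : -(y / √(c ^ 2 + y ^ 2)) = c / √(c ^ 2 + x ^ 2) := by
    rw [hsqrt]
    field_simp
    linear_combination -hxy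
  have hoff : c / √(c ^ 2 + y ^ 2) = x / √(c ^ 2 + x ^ 2) := by
    rw [hsqrt]
    field_simp
  have hunit : (c / √(c ^ 2 + x ^ 2)) ^ 2 + (x / √(c ^ 2 + x ^ 2)) ^ 2 = 1 := by
    rw [div_pow, div_pow, ← add_div, sq_sqrt (by positivity), div_self (by positivity)]
  rw [of_mem_specialOrthogonalGroup_fin_two_iff, hdiag, hoff, neg_sq]
  exact ⟨rfl, rfl, hunit⟩

end OrthogonalColumns

lemma eigenvector_ratios_mul_eq_neg_three {K : Type*} [Field K] {μ d : K} (hμ : 1 - 2 * μ ≠ 0)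
    (hd : d ^ 2 = 1 - 3 * μ + 3 * μ ^ 2) :
    (1 + 2 * d) / (1 - 2 * μ) * ((1 - 2 * d) / (1 - 2 * μ)) = -3 := by
  field_simp
  linear_combination -4 * hd

theorem stmt_4_general (μ : ℝ) (hμ : μ < 1 / 2) :
    let d : ℝ := Real.sqrt (1 - 3 * μ + 3 * μ ^ 2)
    let v₁₁ : ℝ := (1 + 2 * d) / ((2 * μ - 1) * Real.sqrt (3 + ((1 + 2 * d) / (1 - 2 * μ)) ^ 2))
    let v₁₂ : ℝ := Real.sqrt 3 / Real.sqrt (3 + ((1 + 2 * d) / (1 - 2 * μ)) ^ 2)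
    let v₂₁ : ℝ := (1 - 2 * d) / ((2 * μ - 1) * Real.sqrt (3 + ((1 - 2 * d) / (1 - 2 * μ)) ^ 2))
    let v₂₂ : ℝ := Real.sqrt 3 / Real.sqrt (3 + ((1 - 2 * d) / (1 - 2 * μ)) ^ 2)
    let C : Matrix (Fin 2) (Fin 2) ℝ := !![v₂₁, v₁₁; v₂₂, v₁₂]
    let J₂ : Matrix (Fin 2) (Fin 2) ℝ := !![0, 1; -1, 0]
    C.det = 1 ∧ v₂₁ * v₁₂ - v₁₁ * v₂₂ = 1 ∧ C⁻¹ * J₂ * C = J₂ := by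
  intro d v₁₁ v₁₂ v₂₁ v₂₂ C J₂
  have hm : 0 < 1 - 2 * μ := by linarith
  have hd : d ^ 2 = 1 - 3 * μ + 3 * μ ^ 2 := sq_sqrt (by nlinarith [sq_nonneg (2 * μ - 1)])
  have h3 : √3 ^ 2 = (3 : ℝ) := sq_sqrt zero_le_three
  have hx : 0 < (1 + 2 * d) / (1 - 2 * μ) := by positivity
  have hxy : (1 + 2 * d) / (1 - 2 * μ) * ((1 - 2 * d) / (1 - 2 * μ)) = -√3 ^ 2 := by
    rw [eigenvector_ratios_mul_eq_neg_three hm.ne' hd, h3]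
  have hC : C ∈ specialOrthogonalGroup (Fin 2) ℝ := by
    simpa only [h3, div_div, ← div_neg, ← neg_mul, neg_sub] using
      normalized_columns_mem_specialOrthogonalGroup (by positivity) hx hxy
  have hdet : C.det = 1 := (mem_specialOrthogonalGroup_iff.mp hC).2
  exact ⟨hdet, det_fin_two_of v₂₁ v₁₁ v₂₂ v₁₂ ▸ hdet,
    inv_mul_symplectic_mul_of_mem_specialOrthogonalGroup hC⟩

/-- For `μ ∈ [0, 1/2)`, the orthogonal matrix `C` whose columns are the unit
eigenvectors `v₂` and `v₁` (in that order) has determinant `1` (equivalently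
`v₂₁·v₁₂ − v₁₁·v₂₂ = 1`), hence is a rotation, and it conjugates the symplectic
matrix `J₂ = [[0,1],[−1,0]]` to itself: `C⁻¹ J₂ C = J₂`, so the change of
coordinates `z = C w` is symplectic. -/
theorem stmt_4 (μ : ℝ) (hμ : μ ∈ Set.Ico (0 : ℝ) (1 / 2)) :
    let d : ℝ := Real.sqrt (1 - 3 * μ + 3 * μ ^ 2)
    let v₁₁ : ℝ := (1 + 2 * d) / ((2 * μ - 1) * Real.sqrt (3 + ((1 + 2 * d) / (1 - 2 * μ)) ^ 2))
    let v₁₂ : ℝ := Real.sqrt 3 / Real.sqrt (3 + ((1 + 2 * d) / (1 - 2 * μ)) ^ 2)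
    let v₂₁ : ℝ := (1 - 2 * d) / ((2 * μ - 1) * Real.sqrt (3 + ((1 - 2 * d) / (1 - 2 * μ)) ^ 2))
    let v₂₂ : ℝ := Real.sqrt 3 / Real.sqrt (3 + ((1 - 2 * d) / (1 - 2 * μ)) ^ 2)
    let C : Matrix (Fin 2) (Fin 2) ℝ := !![v₂₁, v₁₁; v₂₂, v₁₂]
    let J₂ : Matrix (Fin 2) (Fin 2) ℝ := !![0, 1; -1, 0]
    C.det = 1 ∧ v₂₁ * v₁₂ - v₁₁ * v₂₂ = 1 ∧ C⁻¹ * J₂ * C = J₂ :=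
  stmt_4_general μ hμ.2
end

section
/- For every μ ∈ [0, 1/2) and every (x̄, ȳ) ≠ (0, 0), let C be the 2×2 matrix with columns v₂ and v₁ and set (x, y) = C·(x̄, ȳ). Then (3/8)x² + (3√3/4)(1 − 2μ)·x·y + (9/8)y² + 1/√(x² + y²) = (1/2)(λ₂ x̄² + λ₁ ȳ²) + 1/√(x̄² + ȳ²); that is, the rotation C transforms the planar effective potential of the Hill four-body problem into the diagonalized form Ω̄(x̄, ȳ) = (1/2)(λ₂ x̄² + λ₁ ȳ²) + 1/√(x̄² + ȳ²). -/
/-!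
The quadratic part of `Ω` is `½ zᵀ H z` for a symmetric `2 × 2` matrix `H`. The matrix `C` has
orthonormal columns that are eigenvectors of `H`, so `Cᵀ C = 1` and `H C = C diag(λ₂, λ₁)`: the
substitution `z ↦ C z` preserves the norm, hence the Kepler term, and diagonalizes the quadratic
part. For `e = ±d`, so that `4 e² - 1 = 3 (1 - 2μ)²`, the vector `(-(1 - 2e) / (1 - 2μ), √3)` is an
eigenvector of `H` with eigenvalue `(3/2)(1 + e)`; `e = d` gives `v₂` and `e = -d` gives `v₁`.
-/

open Matrix

section OrthonormalColumns

variable {m n R : Type*} [Fintype m] [Fintype n] [DecidableEq m] [CommSemiring R]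

theorem mulVec_dotProduct_mulVec_of_transpose_mul_self {C : Matrix n m R} (hC : Cᵀ * C = 1)
    (z w : m → R) : C *ᵥ z ⬝ᵥ C *ᵥ w = z ⬝ᵥ w := by
  rw [dotProduct_mulVec, vecMul_mulVec, hC, vecMul_one]

theorem mulVec_dotProduct_mulVec_of_mul_eq_mul {C : Matrix n m R} (hC : Cᵀ * C = 1)
    {A : Matrix n n R} {B : Matrix m m R} (hAB : A * C = C * B) (z : m → R) :
    C *ᵥ z ⬝ᵥ A *ᵥ (C *ᵥ z) = z ⬝ᵥ B *ᵥ z := by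
  rw [mulVec_mulVec, hAB, ← mulVec_mulVec, mulVec_dotProduct_mulVec_of_transpose_mul_self hC]

end OrthonormalColumns

section QuadraticKepler

variable {m n : Type*} [Fintype m] [Fintype n]

/-- The potential `½ zᵀ A z + 1 / |z|`: a quadratic potential with Hessian `A` plus the potential
of a unit point mass at the origin. Both `Ω` and `Ω̄` are of this form. The Euclidean norm is
written as `√(z ⬝ᵥ z)`, since `n → ℝ` carries the supremum norm. -/
noncomputable def quadraticKeplerPotential (A : Matrix n n ℝ) (z : n → ℝ) : ℝ :=
  1 / 2 * (z ⬝ᵥ A *ᵥ z) + 1 / √(z ⬝ᵥ z)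

theorem quadraticKeplerPotential_mulVec [DecidableEq m] {C : Matrix n m ℝ} (hC : Cᵀ * C = 1)
    {A : Matrix n n ℝ} {B : Matrix m m ℝ} (hAB : A * C = C * B) (z : m → ℝ) :
    quadraticKeplerPotential A (C *ᵥ z) = quadraticKeplerPotential B z := by
  simp only [quadraticKeplerPotential, mulVec_dotProduct_mulVec_of_mul_eq_mul hC hAB,
    mulVec_dotProduct_mulVec_of_transpose_mul_self hC]

theorem quadraticKeplerPotential_diagonal (a b x y : ℝ) :
    quadraticKeplerPotential (diagonal ![a, b]) ![x, y] =
      1 / 2 * (a * x ^ 2 + b * y ^ 2) + 1 / √(x ^ 2 + y ^ 2) := by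
  simp only [quadraticKeplerPotential, mulVec_diagonal, vec2_dotProduct, cons_val_zero,
    cons_val_one, ← sq]
  ring

end QuadraticKepler

/-- The Hessian of the quadratic part of the effective potential `Ω`. -/
noncomputable def hillMatrix (μ : ℝ) : Matrix (Fin 2) (Fin 2) ℝ :=
  !![3 / 4, 3 * √3 / 4 * (1 - 2 * μ); 3 * √3 / 4 * (1 - 2 * μ), 9 / 4]

theorem hillMatrix_mulVec (μ x y : ℝ) :
    hillMatrix μ *ᵥ ![x, y] =
      ![3 / 4 * x + 3 * √3 / 4 * (1 - 2 * μ) * y, 3 * √3 / 4 * (1 - 2 * μ) * x + 9 / 4 * y] := by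
  ext i
  fin_cases i <;> simp [hillMatrix, mulVec, dotProduct]

theorem quadraticKeplerPotential_hillMatrix (μ x y : ℝ) :
    quadraticKeplerPotential (hillMatrix μ) ![x, y] =
      3 / 8 * x ^ 2 + 3 * √3 / 4 * (1 - 2 * μ) * x * y + 9 / 8 * y ^ 2 + 1 / √(x ^ 2 + y ^ 2) := by
  rw [quadraticKeplerPotential, hillMatrix_mulVec, vec2_dotProduct', vec2_dotProduct', ← sq, ← sq]
  ring

/-- The quantity `d` of the paper, for which the eigenvalues of `hillMatrix μ` are
`(3 / 2) (1 ± d)`. -/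
noncomputable def hillRoot (μ : ℝ) : ℝ :=
  √(1 - 3 * μ + 3 * μ ^ 2)

/-- The eigenvalue of `hillMatrix μ` belonging to a root `e = ±d`: it is `λ₂` at `d` and `λ₁` at
`-d`. -/
noncomputable def hillEigenvalue (e : ℝ) : ℝ :=
  3 / 2 * (1 + e)

/-- The ratio `(1 - 2e) / (1 - 2μ)` appearing in the eigenvectors of `hillMatrix μ`. -/
noncomputable def hillRatio (μ e : ℝ) : ℝ :=
  (1 - 2 * e) / (1 - 2 * μ)

/-- The normalized eigenvector of `hillMatrix μ` belonging to a root `e = ±d`: it is `v₂` at `d` and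
`v₁` at `-d`. -/
noncomputable def hillEigenvector (μ e : ℝ) : Fin 2 → ℝ :=
  ![(1 - 2 * e) / ((2 * μ - 1) * √(3 + hillRatio μ e ^ 2)), √3 / √(3 + hillRatio μ e ^ 2)]

/-- The matrix `C` of the paper, with columns `v₂` and `v₁`. -/
noncomputable def hillModalMatrix (μ : ℝ) : Matrix (Fin 2) (Fin 2) ℝ :=
  (of ![hillEigenvector μ (hillRoot μ), hillEigenvector μ (-hillRoot μ)])ᵀ

section HillEigenvectors

variable {μ e : ℝ}

theorem four_mul_hillRoot_sq_sub_one (μ : ℝ) :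
    4 * hillRoot μ ^ 2 - 1 = 3 * (1 - 2 * μ) ^ 2 := by
  have h_nonneg : 0 ≤ 1 - 3 * μ + 3 * μ ^ 2 := by nlinarith [sq_nonneg (2 * μ - 1)]
  rw [hillRoot, Real.sq_sqrt h_nonneg]
  ring

theorem hillRatio_mul_one_sub_two_mul (hμ : μ ≠ 1 / 2) (e : ℝ) :
    hillRatio μ e * (1 - 2 * μ) = 1 - 2 * e :=
  div_mul_cancel₀ _ fun h => hμ (by linarith)

theorem hillRatio_mul_one_add_two_mul (hμ : μ ≠ 1 / 2) (he : 4 * e ^ 2 - 1 = 3 * (1 - 2 * μ) ^ 2) :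
    hillRatio μ e * (1 + 2 * e) = -3 * (1 - 2 * μ) := by
  have h_ne : 1 - 2 * μ ≠ 0 := fun h => hμ (by linarith)
  rw [hillRatio, div_mul_eq_mul_div, div_eq_iff h_ne]
  linear_combination -he

theorem hillRatio_mul_hillRatio_neg (hμ : μ ≠ 1 / 2) (he : 4 * e ^ 2 - 1 = 3 * (1 - 2 * μ) ^ 2) :
    hillRatio μ e * hillRatio μ (-e) = -3 := by
  have h_ne : 1 - 2 * μ ≠ 0 := fun h => hμ (by linarith)
  refine mul_right_cancel₀ h_ne ?_
  rw [mul_assoc, hillRatio_mul_one_sub_two_mul hμ, ← hillRatio_mul_one_add_two_mul hμ he]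
  ring

theorem hillEigenvector_eq_smul (μ e : ℝ) :
    hillEigenvector μ e = (√(3 + hillRatio μ e ^ 2))⁻¹ • ![-hillRatio μ e, √3] := by
  ext i
  fin_cases i
  · change (1 - 2 * e) / ((2 * μ - 1) * √(3 + hillRatio μ e ^ 2)) =
      (√(3 + hillRatio μ e ^ 2))⁻¹ * -hillRatio μ e
    rw [div_mul_eq_div_div, ← neg_sub 1 (2 * μ), div_neg, ← hillRatio, div_eq_inv_mul]
  · exact div_eq_inv_mul _ _

theorem hillEigenvector_dotProduct_self (μ e : ℝ) :
    hillEigenvector μ e ⬝ᵥ hillEigenvector μ e = 1 := by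
  have h_pos : 0 < 3 + hillRatio μ e ^ 2 := by positivity
  have h_norm_sq : ![-hillRatio μ e, √3] ⬝ᵥ ![-hillRatio μ e, √3] = 3 + hillRatio μ e ^ 2 := by
    simp [← sq, add_comm]
  rw [hillEigenvector_eq_smul, smul_dotProduct, dotProduct_smul, h_norm_sq, smul_smul, smul_eq_mul,
    ← sq, inv_pow, Real.sq_sqrt h_pos.le, inv_mul_cancel₀ h_pos.ne']

theorem hillEigenvector_dotProduct_neg (hμ : μ ≠ 1 / 2)
    (he : 4 * e ^ 2 - 1 = 3 * (1 - 2 * μ) ^ 2) :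
    hillEigenvector μ e ⬝ᵥ hillEigenvector μ (-e) = 0 := by
  have h_orth : ![-hillRatio μ e, √3] ⬝ᵥ ![-hillRatio μ (-e), √3] = 0 := by
    simp [hillRatio_mul_hillRatio_neg hμ he]
  rw [hillEigenvector_eq_smul, hillEigenvector_eq_smul, smul_dotProduct, dotProduct_smul, h_orth,
    smul_zero, smul_zero]

theorem hillMatrix_mulVec_hillEigenvector (hμ : μ ≠ 1 / 2)
    (he : 4 * e ^ 2 - 1 = 3 * (1 - 2 * μ) ^ 2) :
    hillMatrix μ *ᵥ hillEigenvector μ e = hillEigenvalue e • hillEigenvector μ e := by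
  have h_sqrt : √3 ^ 2 = (3 : ℝ) := Real.sq_sqrt (by norm_num)
  have h_direction : hillMatrix μ *ᵥ ![-hillRatio μ e, √3] =
      hillEigenvalue e • ![-hillRatio μ e, √3] := by
    rw [hillMatrix_mulVec, smul_vec2, hillEigenvalue, smul_eq_mul, smul_eq_mul]
    congrm ![?_, ?_]
    · linear_combination
        3 / 4 * (1 - 2 * μ) * h_sqrt + 3 / 4 * hillRatio_mul_one_add_two_mul hμ he
    · linear_combination -3 / 4 * √3 * hillRatio_mul_one_sub_two_mul hμ e
  rw [hillEigenvector_eq_smul, mulVec_smul, h_direction, smul_comm]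

theorem hillModalMatrix_transpose_mul_self (hμ : μ ≠ 1 / 2) :
    (hillModalMatrix μ)ᵀ * hillModalMatrix μ = 1 := by
  have h_orth := hillEigenvector_dotProduct_neg hμ (four_mul_hillRoot_sq_sub_one μ)
  ext i j
  fin_cases i <;> fin_cases j
  · exact hillEigenvector_dotProduct_self μ (hillRoot μ)
  · exact h_orth
  · exact (dotProduct_comm _ _).trans h_orth
  · exact hillEigenvector_dotProduct_self μ (-hillRoot μ)

theorem hillMatrix_mul_hillModalMatrix (hμ : μ ≠ 1 / 2) :
    hillMatrix μ * hillModalMatrix μ = hillModalMatrix μ *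
      diagonal ![hillEigenvalue (hillRoot μ), hillEigenvalue (-hillRoot μ)] := by
  have h_root := four_mul_hillRoot_sq_sub_one μ
  have h_pos := hillMatrix_mulVec_hillEigenvector hμ h_root
  have h_neg := hillMatrix_mulVec_hillEigenvector (e := -hillRoot μ) hμ (by rwa [neg_sq])
  ext i j
  rw [mul_diagonal, mul_comm]
  fin_cases j
  · exact congrFun h_pos i
  · exact congrFun h_neg i

theorem hillModalMatrix_mulVec (μ a b : ℝ) :
    hillModalMatrix μ *ᵥ ![a, b] =
      ![hillEigenvector μ (hillRoot μ) 0 * a + hillEigenvector μ (-hillRoot μ) 0 * b,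
        hillEigenvector μ (hillRoot μ) 1 * a + hillEigenvector μ (-hillRoot μ) 1 * b] := by
  ext i
  fin_cases i <;> simp [hillModalMatrix, mulVec, dotProduct]

end HillEigenvectors

theorem stmt_6_general {μ : ℝ} (hμ : μ ≠ 1 / 2) {z : Fin 2 → ℝ} (_hz : z ≠ 0) :
    quadraticKeplerPotential (hillMatrix μ) (hillModalMatrix μ *ᵥ z) =
      quadraticKeplerPotential
        (diagonal ![hillEigenvalue (hillRoot μ), hillEigenvalue (-hillRoot μ)]) z :=
  quadraticKeplerPotential_mulVec (hillModalMatrix_transpose_mul_self hμ)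
    (hillMatrix_mul_hillModalMatrix hμ) z

/-- For `μ ∈ [0, 1/2)`, the rotation `C` with columns `v₂`, `v₁` transforms the planar
effective potential `Ω(x,y) = (3/8)x² + (3√3/4)(1 − 2μ)xy + (9/8)y² + 1/√(x² + y²)` of
the Hill four-body problem into the diagonalized form
`Ω̄(x̄,ȳ) = (1/2)(λ₂x̄² + λ₁ȳ²) + 1/√(x̄² + ȳ²)`. -/
theorem stmt_6 (μ : ℝ) (hμ : μ ∈ Set.Ico (0 : ℝ) (1 / 2))
    (xb yb : ℝ) (hxy : (xb, yb) ≠ (0, 0)) :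
    let d : ℝ := Real.sqrt (1 - 3 * μ + 3 * μ ^ 2)
    let lam₁ : ℝ := (3 / 2) * (1 - d)
    let lam₂ : ℝ := (3 / 2) * (1 + d)
    let v₁₁ : ℝ := (1 + 2 * d) / ((2 * μ - 1) * Real.sqrt (3 + ((1 + 2 * d) / (1 - 2 * μ)) ^ 2))
    let v₁₂ : ℝ := Real.sqrt 3 / Real.sqrt (3 + ((1 + 2 * d) / (1 - 2 * μ)) ^ 2)
    let v₂₁ : ℝ := (1 - 2 * d) / ((2 * μ - 1) * Real.sqrt (3 + ((1 - 2 * d) / (1 - 2 * μ)) ^ 2))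
    let v₂₂ : ℝ := Real.sqrt 3 / Real.sqrt (3 + ((1 - 2 * d) / (1 - 2 * μ)) ^ 2)
    let x : ℝ := v₂₁ * xb + v₁₁ * yb
    let y : ℝ := v₂₂ * xb + v₁₂ * yb
    (3 / 8) * x ^ 2 + (3 * Real.sqrt 3 / 4) * (1 - 2 * μ) * x * y + (9 / 8) * y ^ 2
        + 1 / Real.sqrt (x ^ 2 + y ^ 2)
      = (1 / 2) * (lam₂ * xb ^ 2 + lam₁ * yb ^ 2) + 1 / Real.sqrt (xb ^ 2 + yb ^ 2) := by
  have h := stmt_6_general (z := ![xb, yb]) hμ.2.ne (by simpa using hxy)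
  rw [hillModalMatrix_mulVec, quadraticKeplerPotential_hillMatrix,
    quadraticKeplerPotential_diagonal] at h
  simpa only [hillEigenvector, hillRatio, hillEigenvalue, hillRoot, mul_neg, sub_neg_eq_add,
    ← sub_eq_add_neg, cons_val_zero, cons_val_one] using h
end

section
/- Let μ ∈ (0, 1/2]. A point (x, y) ∈ ℝ² ∖ {(0,0)} is a critical point of the rotated planar effective potential Ω̄(x,y) = (1/2)(λ₂x² + λ₁y²) + 1/√(x² + y²) if and only if it is one of the four points L₁ = (λ₂^{−1/3}, 0), L₂ = (−λ₂^{−1/3}, 0), L₃ = (0, λ₁^{−1/3}), L₄ = (0, −λ₁^{−1/3}). In particular, the Hill four-body problem has exactly four equilibrium points, given explicitly in terms of μ. -/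
/-!
Away from the origin the gradient of `(a x² + b y²) / 2 + 1 / r` is `((a - r⁻³) x, (b - r⁻³) y)`.
Since `a ≠ b`, the two brackets cannot vanish together, so a critical point lies on a coordinate
axis, where `r` is the absolute value of the nonzero coordinate and `r⁻³` equals `a` or `b`.
-/

/-- The planar effective potential, a diagonal quadratic form plus the Newtonian term `1 / r`.
The rotated potential of the Hill four-body problem is the case `a = λ₂`, `b = λ₁`. -/
noncomputable def effectivePotential (a b x y : ℝ) : ℝ :=
  (1 / 2) * (a * x ^ 2 + b * y ^ 2) + 1 / √(x ^ 2 + y ^ 2)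

lemma effectivePotential_swap (a b x y : ℝ) :
    effectivePotential a b x y = effectivePotential b a y x := by
  simp only [effectivePotential, add_comm]

section

variable {x y : ℝ}

lemma hasDerivAt_effectivePotential_fst (a b : ℝ) (h : x ^ 2 + y ^ 2 ≠ 0) :
    HasDerivAt (fun u ↦ effectivePotential a b u y) (x * (a - 1 / √(x ^ 2 + y ^ 2) ^ 3)) x := by
  have hr : √(x ^ 2 + y ^ 2) ≠ 0 := (Real.sqrt_ne_zero (by positivity)).2 h
  have h_sq : HasDerivAt (fun u : ℝ ↦ u ^ 2) (2 * x) x := by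
    simpa using hasDerivAt_pow 2 x
  have h_quadratic : HasDerivAt (fun u ↦ (1 / 2) * (a * u ^ 2 + b * y ^ 2)) (a * x) x :=
    (((h_sq.const_mul a).add_const (b * y ^ 2)).const_mul (1 / 2)).congr_deriv (by ring)
  have h_newton : HasDerivAt (fun u ↦ 1 / √(u ^ 2 + y ^ 2)) (-x / √(x ^ 2 + y ^ 2) ^ 3) x := by
    simp only [one_div]
    refine (((h_sq.add_const (y ^ 2)).sqrt h).fun_inv hr).congr_deriv ?_
    field_simp
  exact (h_quadratic.add h_newton).congr_deriv (by ring)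

lemma hasDerivAt_effectivePotential_snd (a b : ℝ) (h : x ^ 2 + y ^ 2 ≠ 0) :
    HasDerivAt (fun v ↦ effectivePotential a b x v) (y * (b - 1 / √(x ^ 2 + y ^ 2) ^ 3)) y := by
  rw [add_comm (x ^ 2)] at h ⊢
  simpa only [effectivePotential_swap b a] using hasDerivAt_effectivePotential_fst b a h

variable {a b : ℝ}

lemma eq_one_div_abs_pow_iff {n : ℕ} (hn : n ≠ 0) (ha : 0 ≤ a) :
    a = 1 / |x| ^ n ↔ x = a ^ (-(1 : ℝ) / n) ∨ x = -a ^ (-(1 : ℝ) / n) := by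
  have h_exponent : -(1 : ℝ) / n = (-(n : ℝ))⁻¹ := by rw [neg_div, one_div, inv_neg]
  rw [← abs_eq (Real.rpow_nonneg ha _), h_exponent,
    Real.eq_rpow_inv (abs_nonneg x) ha (neg_ne_zero.2 (Nat.cast_ne_zero.2 hn)),
    Real.rpow_neg (abs_nonneg x), Real.rpow_natCast, one_div, eq_comm]

theorem stmt_9_general (ha : 0 < a) (hb : 0 < b) (hab : a ≠ b) (hxy : (x, y) ≠ (0, 0)) :
    (deriv (fun u ↦ effectivePotential a b u y) x = 0 ∧
        deriv (fun v ↦ effectivePotential a b x v) y = 0) ↔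
      ((x, y) = (a ^ (-(1 : ℝ) / 3), 0) ∨ (x, y) = (-a ^ (-(1 : ℝ) / 3), 0) ∨
        (x, y) = (0, b ^ (-(1 : ℝ) / 3)) ∨ (x, y) = (0, -b ^ (-(1 : ℝ) / 3))) := by
  have h : x ^ 2 + y ^ 2 ≠ 0 := by
    contrapose! hxy
    rw [Prod.mk.injEq]
    constructor <;> nlinarith
  have root_a := eq_one_div_abs_pow_iff (x := x) three_ne_zero ha.le
  have root_b := eq_one_div_abs_pow_iff (x := y) three_ne_zero hb.le
  rw [(hasDerivAt_effectivePotential_fst a b h).deriv,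
    (hasDerivAt_effectivePotential_snd a b h).deriv]
  push_cast at root_a root_b
  simp only [Prod.mk.injEq, mul_eq_zero, sub_eq_zero]
  rcases eq_or_ne x 0 with rfl | hx
  · have hy : y ≠ 0 := fun hy ↦ hxy (by rw [hy])
    simpa [hy, Real.sqrt_sq_eq_abs] using root_b
  rcases eq_or_ne y 0 with rfl | hy
  · simpa [hx, Real.sqrt_sq_eq_abs] using root_a
  · simp only [hx, hy, false_or, and_false, false_and, or_false, iff_false]
    exact fun ⟨ha_eq, hb_eq⟩ ↦ hab (ha_eq.trans hb_eq.symm)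

end

lemma sqrt_one_sub_three_mul_add_three_mul_sq_pos (μ : ℝ) : 0 < √(1 - 3 * μ + 3 * μ ^ 2) :=
  Real.sqrt_pos.2 (by nlinarith [sq_nonneg (μ - 1 / 2)])

lemma sqrt_one_sub_three_mul_add_three_mul_sq_lt_one {μ : ℝ} (h_pos : 0 < μ) (h_lt : μ < 1) :
    √(1 - 3 * μ + 3 * μ ^ 2) < 1 :=
  (Real.sqrt_lt' one_pos).2 (by nlinarith)

/-- For `μ ∈ (0, 1/2]`, a point `(x,y) ≠ (0,0)` is a critical point of the rotated
planar effective potential `Ω̄(x,y) = (1/2)(λ₂x² + λ₁y²) + 1/√(x² + y²)` of the Hill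
four-body problem if and only if it is one of the four points
`L₁ = (λ₂^{−1/3}, 0)`, `L₂ = (−λ₂^{−1/3}, 0)`, `L₃ = (0, λ₁^{−1/3})`,
`L₄ = (0, −λ₁^{−1/3})`. -/
theorem stmt_9 (μ : ℝ) (hμ : μ ∈ Set.Ioc (0 : ℝ) (1 / 2)) :
    let d : ℝ := Real.sqrt (1 - 3 * μ + 3 * μ ^ 2)
    let lam₁ : ℝ := (3 / 2) * (1 - d)
    let lam₂ : ℝ := (3 / 2) * (1 + d)
    let Ω : ℝ → ℝ → ℝ := fun x y =>
      (1 / 2) * (lam₂ * x ^ 2 + lam₁ * y ^ 2) + 1 / Real.sqrt (x ^ 2 + y ^ 2)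
    ∀ x y : ℝ, (x, y) ≠ (0, 0) →
      ((deriv (fun u => Ω u y) x = 0 ∧ deriv (fun v => Ω x v) y = 0) ↔
        ((x, y) = (lam₂ ^ (-(1 : ℝ) / 3), 0) ∨ (x, y) = (-lam₂ ^ (-(1 : ℝ) / 3), 0) ∨
         (x, y) = (0, lam₁ ^ (-(1 : ℝ) / 3)) ∨ (x, y) = (0, -lam₁ ^ (-(1 : ℝ) / 3)))) := by
  intro d lam₁ lam₂ _ x y hxy
  have hd_pos : 0 < d := sqrt_one_sub_three_mul_add_three_mul_sq_pos μ
  have hd_lt : d < 1 := sqrt_one_sub_three_mul_add_three_mul_sq_lt_one hμ.1 (by linarith [hμ.2])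
  have h_lam₁ : 0 < (3 / 2) * (1 - d) := by linarith
  have h_lam : (3 / 2) * (1 - d) < (3 / 2) * (1 + d) := by linarith
  exact stmt_9_general (h_lam₁.trans h_lam) h_lam₁ h_lam.ne' hxy
end

section
/- For every μ ∈ [0, 1/2], set A = 4 − 3λ₂ − (λ₁ − λ₂) and B = 3λ₂(λ₁ − λ₂), where d = √(1 − 3μ + 3μ²), λ₁ = (3/2)(1 − d), λ₂ = (3/2)(1 + d). Then there exist real numbers Λ > 0 and ω > 0 such that for all z ∈ ℂ, z⁴ + Az² + B = (z − Λ)(z + Λ)(z − iω)(z + iω). In other words, the eigenvalues of the linearization of the Hill four-body problem at the equilibrium points L₁ and L₂ are ±Λ and ±iω with Λ, ω > 0, so L₁ and L₂ are of saddle-center type and are unstable for every μ ∈ [0, 1/2]. -/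
/-!
As a quadratic in `z²`, the characteristic polynomial has constant term `B = -(27/2) d (1 + d)`,
which is negative because `d > 0`. Its two roots in `z²` are therefore real and of opposite signs;
they are `Λ²` and `-ω²`.
-/

theorem exists_pos_sub_eq_and_mul_eq (a : ℝ) {b : ℝ} (hb : 0 < b) :
    ∃ p q : ℝ, 0 < p ∧ 0 < q ∧ q - p = a ∧ p * q = b := by
  -- `p` and `-q` are the roots of `t² + a t - b`.
  set s := √(a ^ 2 + 4 * b)
  have hs_sq : s ^ 2 = a ^ 2 + 4 * b := Real.sq_sqrt (by positivity)
  obtain ⟨hs_neg, hs_pos⟩ : -s < a ∧ a < s :=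
    abs_lt_of_sq_lt_sq' (by linarith) (Real.sqrt_nonneg _)
  exact ⟨(s - a) / 2, (s + a) / 2, by linarith, by linarith, by ring,
    by linear_combination hs_sq / 4⟩

theorem exists_pos_sq_sub_sq_eq_and_sq_mul_sq_eq (a : ℝ) {b : ℝ} (hb : 0 < b) :
    ∃ x y : ℝ, 0 < x ∧ 0 < y ∧ y ^ 2 - x ^ 2 = a ∧ x ^ 2 * y ^ 2 = b := by
  obtain ⟨p, q, hp, hq, hsub, hmul⟩ := exists_pos_sub_eq_and_mul_eq a hb
  refine ⟨√p, √q, Real.sqrt_pos.mpr hp, Real.sqrt_pos.mpr hq, ?_, ?_⟩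
  · rwa [Real.sq_sqrt hp.le, Real.sq_sqrt hq.le]
  · rwa [Real.sq_sqrt hp.le, Real.sq_sqrt hq.le]

theorem biquadratic_eq_prod_of_sq_eq_neg_one {R : Type*} [CommRing R] {i : R} (hi : i ^ 2 = -1)
    (x y z : R) :
    z ^ 4 + (y ^ 2 - x ^ 2) * z ^ 2 - x ^ 2 * y ^ 2
      = (z - x) * (z + x) * (z - i * y) * (z + i * y) := by
  linear_combination y ^ 2 * (z ^ 2 - x ^ 2) * hi

theorem exists_pos_biquadratic_eq_prod (A : ℝ) {B : ℝ} (hB : B < 0) :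
    ∃ Λ ω : ℝ, 0 < Λ ∧ 0 < ω ∧ ∀ z : ℂ,
      z ^ 4 + A * z ^ 2 + B = (z - Λ) * (z + Λ) * (z - Complex.I * ω) * (z + Complex.I * ω) := by
  obtain ⟨Λ, ω, hΛ, hω, rfl, hmul⟩ := exists_pos_sq_sub_sq_eq_and_sq_mul_sq_eq A (neg_pos.mpr hB)
  obtain rfl : B = -(Λ ^ 2 * ω ^ 2) := by rw [hmul, neg_neg]
  refine ⟨Λ, ω, hΛ, hω, fun z => ?_⟩
  rw [← biquadratic_eq_prod_of_sq_eq_neg_one Complex.I_sq]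
  push_cast
  ring

theorem one_sub_three_mul_add_three_mul_sq_pos {R : Type*} [CommRing R] [LinearOrder R]
    [IsStrictOrderedRing R] (x : R) : 0 < 1 - 3 * x + 3 * x ^ 2 := by
  have h : 4 * (1 - 3 * x + 3 * x ^ 2) = 3 * (2 * x - 1) ^ 2 + 1 := by ring
  exact pos_of_mul_pos_right (h ▸ by positivity) zero_le_four

theorem stmt_12_general (μ : ℝ) :
    let d : ℝ := Real.sqrt (1 - 3 * μ + 3 * μ ^ 2)
    let lam₁ : ℝ := (3 / 2) * (1 - d)
    let lam₂ : ℝ := (3 / 2) * (1 + d)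
    let A : ℝ := 4 - 3 * lam₂ - (lam₁ - lam₂)
    let B : ℝ := 3 * lam₂ * (lam₁ - lam₂)
    ∃ Λ ω : ℝ, 0 < Λ ∧ 0 < ω ∧ ∀ z : ℂ,
      z ^ 4 + A * z ^ 2 + B = (z - Λ) * (z + Λ) * (z - Complex.I * ω) * (z + Complex.I * ω) := by
  intro d lam₁ lam₂ A B
  have hd : 0 < d := Real.sqrt_pos.mpr (one_sub_three_mul_add_three_mul_sq_pos μ)
  have hB : B = -(27 / 2 * (d * (1 + d))) := by ring
  have hB_neg : B < 0 := hB ▸ neg_neg_of_pos (by positivity)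
  exact exists_pos_biquadratic_eq_prod A hB_neg

/-- For `μ ∈ [0, 1/2]`, the characteristic polynomial `z⁴ + Az² + B` of the
linearization of the Hill four-body problem at the equilibrium points `L₁`, `L₂`,
with `A = 4 − 3λ₂ − (λ₁ − λ₂)` and `B = 3λ₂(λ₁ − λ₂)`, factors as
`(z − Λ)(z + Λ)(z − iω)(z + iω)` with `Λ, ω > 0`: the eigenvalues are `±Λ` and
`±iω`, so `L₁` and `L₂` are of saddle-center type and unstable. -/
theorem stmt_12 (μ : ℝ) (hμ : μ ∈ Set.Icc (0 : ℝ) (1 / 2)) :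
    let d : ℝ := Real.sqrt (1 - 3 * μ + 3 * μ ^ 2)
    let lam₁ : ℝ := (3 / 2) * (1 - d)
    let lam₂ : ℝ := (3 / 2) * (1 + d)
    let A : ℝ := 4 - 3 * lam₂ - (lam₁ - lam₂)
    let B : ℝ := 3 * lam₂ * (lam₁ - lam₂)
    ∃ Λ ω : ℝ, 0 < Λ ∧ 0 < ω ∧ ∀ z : ℂ,
      z ^ 4 + (A : ℂ) * z ^ 2 + (B : ℂ)
        = (z - (Λ : ℂ)) * (z + (Λ : ℂ)) * (z - Complex.I * (ω : ℂ)) * (z + Complex.I * (ω : ℂ)) :=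
  stmt_12_general μ
end

section
/- There exists a unique μ₀ ∈ (0, 1/2) such that, writing d(μ) = √(1 − 3μ + 3μ²) and D(μ) = ((3d(μ) − 1)/2)² − 4·(27/2)(1 − d(μ))d(μ), one has D(μ) > 0 for all μ ∈ (0, μ₀), D(μ₀) = 0, and D(μ) < 0 for all μ ∈ (μ₀, 1/2]. Moreover d(μ₀) = (37 + 8√21)/75. -/
/-!
Seen as a function of `d`, the discriminant is the quadratic `(225 d² - 222 d + 1) / 4`, whose roots
`(37 ± 8√21) / 75` lie on either side of `1/2`. Since `d ≥ 1/2` everywhere, only the upper root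
matters: the discriminant has the sign of `d - (37 + 8√21) / 75`. As `μ` runs over `[0, 1/2]`, `d`
decreases from `1` to `1/2`, so it crosses the upper root exactly once.
-/

open Set

namespace HillFourBody

/-- The quantity `d = √(1 - 3μ + 3μ²)` attached to the mass parameter `μ`, in terms of which the
linearization at `L₃` and `L₄` is expressed. The radicand is at least `1/4` for every real `μ`. -/
noncomputable def dParam (μ : ℝ) : ℝ := √(1 - 3 * μ + 3 * μ ^ 2)

/-- The discriminant `A² - 4B` of the characteristic polynomial `λ⁴ + Aλ² + B` at `L₃` and `L₄`,
where `A = (3d - 1) / 2` and `B = (27 / 2) (1 - d) d`, as a function of a free real variable `d`. -/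
noncomputable def charDiscr (d : ℝ) : ℝ :=
  ((3 * d - 1) / 2) ^ 2 - 4 * ((27 / 2) * (1 - d) * d)

/-- The smaller root of `charDiscr`. -/
noncomputable def lowerRoot : ℝ := (37 - 8 * √21) / 75

/-- The larger root of `charDiscr`, which is the critical value of `d`. -/
noncomputable def upperRoot : ℝ := (37 + 8 * √21) / 75

theorem charDiscr_eq_mul (d : ℝ) :
    charDiscr d = 225 / 4 * (d - lowerRoot) * (d - upperRoot) := by
  have sq_sqrt : √21 ^ 2 = (21 : ℝ) := Real.sq_sqrt (by norm_num)
  unfold charDiscr lowerRoot upperRoot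
  linear_combination 16 / 25 * sq_sqrt

theorem lowerRoot_lt_half : lowerRoot < 1 / 2 := by
  have sqrt_nonneg : 0 ≤ √(21 : ℝ) := Real.sqrt_nonneg 21
  unfold lowerRoot
  linarith

theorem upperRoot_mem_Ioo : upperRoot ∈ Ioo (1 / 2) 1 := by
  have lt_sqrt : 4 < √(21 : ℝ) := (Real.lt_sqrt (by norm_num)).2 (by norm_num)
  have sqrt_lt : √(21 : ℝ) < 19 / 4 := (Real.sqrt_lt' (by norm_num)).2 (by norm_num)
  unfold upperRoot
  constructor <;> linarith

theorem charDiscr_upperRoot : charDiscr upperRoot = 0 := by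
  rw [charDiscr_eq_mul, sub_self, mul_zero]

theorem charDiscr_pos_iff {d : ℝ} (hd : lowerRoot < d) : 0 < charDiscr d ↔ upperRoot < d := by
  have factor_pos : 0 < 225 / 4 * (d - lowerRoot) := mul_pos (by norm_num) (sub_pos.2 hd)
  rw [charDiscr_eq_mul, mul_pos_iff_of_pos_left factor_pos, sub_pos]

theorem charDiscr_neg_iff {d : ℝ} (hd : lowerRoot < d) : charDiscr d < 0 ↔ d < upperRoot := by
  have factor_pos : 0 < 225 / 4 * (d - lowerRoot) := mul_pos (by norm_num) (sub_pos.2 hd)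
  rw [charDiscr_eq_mul, ← smul_eq_mul, smul_neg_iff_of_pos_left factor_pos, sub_neg]

theorem dParam_eq_sqrt_add (μ : ℝ) : dParam μ = √(3 * (1 / 2 - μ) ^ 2 + (1 / 2) ^ 2) := by
  unfold dParam
  ring_nf

theorem dParam_zero : dParam 0 = 1 := by
  norm_num [dParam]

theorem dParam_half : dParam (1 / 2) = 1 / 2 := by
  rw [dParam_eq_sqrt_add, sub_self, zero_pow two_ne_zero, mul_zero, zero_add]
  exact Real.sqrt_sq (by norm_num)

theorem half_le_dParam (μ : ℝ) : 1 / 2 ≤ dParam μ := by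
  rw [dParam_eq_sqrt_add]
  exact Real.le_sqrt_of_sq_le (le_add_of_nonneg_left (by positivity))

theorem lowerRoot_lt_dParam (μ : ℝ) : lowerRoot < dParam μ :=
  lowerRoot_lt_half.trans_le (half_le_dParam μ)

theorem continuous_dParam : Continuous dParam := by
  unfold dParam
  fun_prop

theorem strictAntiOn_dParam : StrictAntiOn dParam (Iic (1 / 2)) := by
  intro a _ b hb hab
  have half_sub_nonneg : 0 ≤ 1 / 2 - b := sub_nonneg.2 hb
  rw [dParam_eq_sqrt_add, dParam_eq_sqrt_add]
  apply Real.sqrt_lt_sqrt (by positivity)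
  gcongr

theorem surjOn_dParam : SurjOn dParam (Ioo 0 (1 / 2)) (Ioo (1 / 2) 1) := by
  have := intermediate_value_Ioo' (by norm_num : (0 : ℝ) ≤ 1 / 2) continuous_dParam.continuousOn
  rwa [dParam_half, dParam_zero] at this

end HillFourBody

open HillFourBody

/-- There exists a unique `μ₀ ∈ (0, 1/2)` such that the discriminant
`D(μ) = ((3d(μ) − 1)/2)² − 4·(27/2)(1 − d(μ))d(μ)`, with `d(μ) = √(1 − 3μ + 3μ²)`,
is positive on `(0, μ₀)`, vanishes at `μ₀`, and is negative on `(μ₀, 1/2]`;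
moreover `d(μ₀) = (37 + 8√21)/75`. -/
theorem stmt_16 :
    let d : ℝ → ℝ := fun μ => Real.sqrt (1 - 3 * μ + 3 * μ ^ 2)
    let D : ℝ → ℝ := fun μ => ((3 * d μ - 1) / 2) ^ 2 - 4 * ((27 / 2) * (1 - d μ) * d μ)
    ∃! μ₀ : ℝ, μ₀ ∈ Set.Ioo (0 : ℝ) (1 / 2) ∧
      (∀ μ ∈ Set.Ioo (0 : ℝ) μ₀, 0 < D μ) ∧ D μ₀ = 0 ∧
      (∀ μ ∈ Set.Ioc μ₀ (1 / 2 : ℝ), D μ < 0) ∧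
      d μ₀ = (37 + 8 * Real.sqrt 21) / 75 := by
  intro d D
  obtain ⟨μ₀, hμ₀, dParam_eq⟩ := surjOn_dParam upperRoot_mem_Ioo
  have hμ₀_le : μ₀ ≤ 1 / 2 := hμ₀.2.le
  refine ⟨μ₀, ⟨hμ₀, fun μ hμ => ?pos, ?zero, fun μ hμ => ?neg, dParam_eq⟩, ?unique⟩
  case pos =>
    have dParam_lt : dParam μ₀ < dParam μ :=
      strictAntiOn_dParam (hμ.2.le.trans hμ₀_le) hμ₀_le hμ.2
    exact (charDiscr_pos_iff (lowerRoot_lt_dParam μ)).2 (dParam_eq ▸ dParam_lt)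
  case zero =>
    change charDiscr (dParam μ₀) = 0
    rw [dParam_eq, charDiscr_upperRoot]
  case neg =>
    have dParam_lt : dParam μ < dParam μ₀ := strictAntiOn_dParam hμ₀_le hμ.2 hμ.1
    exact (charDiscr_neg_iff (lowerRoot_lt_dParam μ)).2 (dParam_eq ▸ dParam_lt)
  case unique =>
    rintro ν ⟨hν, -, -, -, dParam_ν⟩
    exact strictAntiOn_dParam.injOn hν.2.le hμ₀_le (dParam_ν.trans dParam_eq.symm)
end

section
/- Let μ₀ ∈ (0, 1/2) be the unique value at which D(μ) = A² − 4B vanishes, where A = (3d − 1)/2, B = (27/2)(1 − d)d, d = √(1 − 3μ + 3μ²). Then: (i) for every μ ∈ (0, μ₀) there exist real ω₁ > ω₂ > 0 such that for all z ∈ ℂ, z⁴ + Az² + B = (z² + ω₁²)(z² + ω₂²), so the eigenvalues at L₃ and L₄ are two distinct pairs ±iω₁, ±iω₂ of purely imaginary numbers; (ii) for μ = μ₀ there exists ω > 0 with z⁴ + Az² + B = (z² + ω²)², so ±iω are eigenvalues of multiplicity two; (iii) for every μ ∈ (μ₀, 1/2] there exist real α > 0 and ω > 0 such that z⁴ + Az²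 + B = ((z − α)² + ω²)((z + α)² + ω²), so the eigenvalues are ±α ± iω (complex saddle). -/
/-!
In `w = z²` the polynomial becomes `w² + A w + B`, with `A > 0` and, for `0 < μ < 1`, also
`B > 0`. Its roots are therefore distinct and negative, equal and negative, or non-real according
to the sign of `D`. In terms of `d`, `4 D = 225 d² - 222 d + 1`, which is increasing for
`d ≥ 1/2`; since `d ≥ 1/2` always and `d` decreases in `μ ≤ 1/2`, the sign of `D` passes from
positive to negative at its zero `μ₀`.
-/

section Biquadratic

variable {a b : ℝ}

theorem exists_pos_sq_eq (ha : 0 < a) : ∃ x : ℝ, 0 < x ∧ x ^ 2 = a :=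
  ⟨√a, Real.sqrt_pos.2 ha, Real.sq_sqrt ha.le⟩

variable (R : Type*) [CommRing R] [Algebra ℝ R]

theorem exists_biquadratic_eq_mul_of_discr_pos (ha : 0 < a) (hb : 0 < b) (h : 4 * b < a ^ 2) :
    ∃ ω₁ ω₂ : ℝ, ω₂ < ω₁ ∧ 0 < ω₂ ∧ ∀ z : R,
      z ^ 4 + algebraMap ℝ R a * z ^ 2 + algebraMap ℝ R b =
        (z ^ 2 + algebraMap ℝ R ω₁ ^ 2) * (z ^ 2 + algebraMap ℝ R ω₂ ^ 2) := by
  obtain ⟨s, hs, hs_sq⟩ := exists_pos_sq_eq (sub_pos.2 h)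
  have hsa : s < a := lt_of_pow_lt_pow_left₀ 2 ha.le (by linarith)
  obtain ⟨ω₁, hω₁, hω₁_sq⟩ := exists_pos_sq_eq (a := (a + s) / 2) (by linarith)
  obtain ⟨ω₂, hω₂, hω₂_sq⟩ := exists_pos_sq_eq (a := (a - s) / 2) (by linarith)
  have hlt : ω₂ < ω₁ := lt_of_pow_lt_pow_left₀ 2 hω₁.le (by linarith)
  have ha_eq : a = ω₁ ^ 2 + ω₂ ^ 2 := by linarith
  have hb_eq : b = ω₁ ^ 2 * ω₂ ^ 2 := by
    rw [hω₁_sq, hω₂_sq]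
    linarith
  refine ⟨ω₁, ω₂, hlt, hω₂, fun z => ?_⟩
  simp only [ha_eq, hb_eq, map_add, map_mul, map_pow]
  ring

theorem exists_biquadratic_eq_sq_of_discr_eq_zero (ha : 0 < a) (h : a ^ 2 = 4 * b) :
    ∃ ω : ℝ, 0 < ω ∧ ∀ z : R,
      z ^ 4 + algebraMap ℝ R a * z ^ 2 + algebraMap ℝ R b =
        (z ^ 2 + algebraMap ℝ R ω ^ 2) ^ 2 := by
  obtain ⟨ω, hω, hω_sq⟩ := exists_pos_sq_eq (half_pos ha)
  have ha_eq : a = ω ^ 2 + ω ^ 2 := by linarith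
  have hb_eq : b = (ω ^ 2) ^ 2 := by
    rw [hω_sq]
    linarith
  refine ⟨ω, hω, fun z => ?_⟩
  simp only [ha_eq, hb_eq, map_add, map_pow]
  ring

theorem exists_biquadratic_eq_mul_of_discr_neg (h : a ^ 2 < 4 * b) :
    ∃ α ω : ℝ, 0 < α ∧ 0 < ω ∧ ∀ z : R,
      z ^ 4 + algebraMap ℝ R a * z ^ 2 + algebraMap ℝ R b =
        ((z - algebraMap ℝ R α) ^ 2 + algebraMap ℝ R ω ^ 2) *
          ((z + algebraMap ℝ R α) ^ 2 + algebraMap ℝ R ω ^ 2) := by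
  have hb : 0 < b := by linarith [sq_nonneg a]
  obtain ⟨r, hr, hr_sq⟩ := exists_pos_sq_eq hb
  obtain ⟨hlower, hupper⟩ : -(2 * r) < a ∧ a < 2 * r :=
    abs_lt_of_sq_lt_sq' (by linarith) (by linarith)
  -- Comparing coefficients requires `2 (ω² - α²) = a` and `α² + ω² = r`.
  obtain ⟨α, hα, hα_sq⟩ := exists_pos_sq_eq (a := (2 * r - a) / 4) (by linarith)
  obtain ⟨ω, hω, hω_sq⟩ := exists_pos_sq_eq (a := (2 * r + a) / 4) (by linarith)
  have ha_eq : a = ω ^ 2 + ω ^ 2 - (α ^ 2 + α ^ 2) := by linarith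
  have hb_eq : b = (α ^ 2 + ω ^ 2) ^ 2 := by
    rw [hα_sq, hω_sq]
    linarith
  refine ⟨α, ω, hα, hω, fun z => ?_⟩
  simp only [ha_eq, hb_eq, map_add, map_sub, map_pow]
  ring

end Biquadratic

namespace HillFourBody

/-- The quantity `d = √(1 - 3μ + 3μ²)` through which the linearization of the Hill four-body
problem at its equilibria depends on the mass parameter `μ`. -/
noncomputable def d (μ : ℝ) : ℝ := √(1 - 3 * μ + 3 * μ ^ 2)

/-- The coefficient `A` of `z²` in the characteristic polynomial `z⁴ + A z² + B` at `L₃`, `L₄`. -/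
noncomputable def quadCoeff (μ : ℝ) : ℝ := (3 * d μ - 1) / 2

/-- The constant coefficient `B` of the characteristic polynomial `z⁴ + A z² + B` at `L₃`, `L₄`. -/
noncomputable def constCoeff (μ : ℝ) : ℝ := 27 / 2 * (1 - d μ) * d μ

/-- The discriminant `D = A² - 4B` of the characteristic polynomial at `L₃`, `L₄`, viewed as a
quadratic in `z²`. -/
noncomputable def discr (μ : ℝ) : ℝ := quadCoeff μ ^ 2 - 4 * constCoeff μ

theorem half_le_d (μ : ℝ) : 1 / 2 ≤ d μ :=
  Real.le_sqrt_of_sq_le (by linarith [sq_nonneg (μ - 1 / 2)])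

theorem d_lt_one {μ : ℝ} (hμ : μ ∈ Set.Ioo (0 : ℝ) 1) : d μ < 1 := by
  have hlt : 0 < μ * (1 - μ) := mul_pos hμ.1 (sub_pos.2 hμ.2)
  exact (Real.sqrt_lt' one_pos).2 (by linarith)

theorem d_strictAntiOn : StrictAntiOn d (Set.Iic (1 / 2)) := by
  intro μ _ ν (hν : ν ≤ 1 / 2) hμν
  have hgap : 0 < (ν - μ) * (1 - μ - ν) := mul_pos (by linarith) (by linarith)
  exact Real.sqrt_lt_sqrt (by linarith [sq_nonneg (ν - 1 / 2)]) (by linarith)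

theorem quadCoeff_pos (μ : ℝ) : 0 < quadCoeff μ := by
  unfold quadCoeff
  linarith [half_le_d μ]

theorem constCoeff_pos {μ : ℝ} (hμ : μ ∈ Set.Ioo (0 : ℝ) 1) : 0 < constCoeff μ := by
  have hd : 0 < d μ := by linarith [half_le_d μ]
  have hd' : 0 < 1 - d μ := sub_pos.2 (d_lt_one hμ)
  unfold constCoeff
  positivity

theorem discr_eq (μ : ℝ) : discr μ = (225 * d μ ^ 2 - 222 * d μ + 1) / 4 := by
  unfold discr quadCoeff constCoeff
  ring

theorem discr_strictAntiOn : StrictAntiOn discr (Set.Iic (1 / 2)) := by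
  intro μ hμ ν hν hμν
  have hd : d ν < d μ := d_strictAntiOn hμ hν hμν
  have hgap : 0 < (d μ - d ν) * (225 * (d μ + d ν) - 222) :=
    mul_pos (sub_pos.2 hd) (by linarith [half_le_d μ, half_le_d ν])
  rw [discr_eq, discr_eq]
  linarith

end HillFourBody

/-- Let `μ₀ ∈ (0, 1/2)` be the unique value at which the discriminant `D = A² − 4B`
vanishes, where `A = (3d − 1)/2`, `B = (27/2)(1 − d)d`, `d = √(1 − 3μ + 3μ²)`. Then
at the equilibrium points `L₃`, `L₄` of the Hill four-body problem:
(i) for `μ ∈ (0, μ₀)` the characteristic polynomial factors as `(z² + ω₁²)(z² + ω₂²)`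
with `ω₁ > ω₂ > 0` (two distinct purely imaginary pairs `±iω₁`, `±iω₂`);
(ii) at `μ = μ₀` it is `(z² + ω²)²` with `ω > 0` (eigenvalues `±iω` of multiplicity two);
(iii) for `μ ∈ (μ₀, 1/2]` it is `((z − α)² + ω²)((z + α)² + ω²)` with `α, ω > 0`
(eigenvalues `±α ± iω`, complex saddle). -/
theorem stmt_17 (μ₀ : ℝ) (hμ₀ : μ₀ ∈ Set.Ioo (0 : ℝ) (1 / 2))
    (hD0 : ((3 * Real.sqrt (1 - 3 * μ₀ + 3 * μ₀ ^ 2) - 1) / 2) ^ 2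
      - 4 * ((27 / 2) * (1 - Real.sqrt (1 - 3 * μ₀ + 3 * μ₀ ^ 2))
          * Real.sqrt (1 - 3 * μ₀ + 3 * μ₀ ^ 2)) = 0) :
    let d : ℝ → ℝ := fun μ => Real.sqrt (1 - 3 * μ + 3 * μ ^ 2)
    let A : ℝ → ℝ := fun μ => (3 * d μ - 1) / 2
    let B : ℝ → ℝ := fun μ => (27 / 2) * (1 - d μ) * d μ
    (∀ μ ∈ Set.Ioo (0 : ℝ) μ₀, ∃ ω₁ ω₂ : ℝ, ω₂ < ω₁ ∧ 0 < ω₂ ∧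
        ∀ z : ℂ, z ^ 4 + (A μ : ℂ) * z ^ 2 + (B μ : ℂ)
          = (z ^ 2 + (ω₁ : ℂ) ^ 2) * (z ^ 2 + (ω₂ : ℂ) ^ 2)) ∧
      (∃ ω : ℝ, 0 < ω ∧
        ∀ z : ℂ, z ^ 4 + (A μ₀ : ℂ) * z ^ 2 + (B μ₀ : ℂ)
          = (z ^ 2 + (ω : ℂ) ^ 2) ^ 2) ∧
      (∀ μ ∈ Set.Ioc μ₀ (1 / 2 : ℝ), ∃ α ω : ℝ, 0 < α ∧ 0 < ω ∧
        ∀ z : ℂ, z ^ 4 + (A μ : ℂ) * z ^ 2 + (B μ : ℂ)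
          = ((z - (α : ℂ)) ^ 2 + (ω : ℂ) ^ 2) * ((z + (α : ℂ)) ^ 2 + (ω : ℂ) ^ 2)) := by
  intro d A B
  have hD : HillFourBody.discr μ₀ = 0 := hD0
  have hμ₀_le : μ₀ ≤ 1 / 2 := hμ₀.2.le
  refine ⟨fun μ hμ => ?_, ?_, fun μ hμ => ?_⟩
  · have hDμ : 0 < HillFourBody.discr μ :=
      hD ▸ HillFourBody.discr_strictAntiOn (hμ.2.le.trans hμ₀_le) hμ₀_le hμ.2
    have hμ_lt : μ < 1 := by linarith [hμ.2]
    exact exists_biquadratic_eq_mul_of_discr_pos ℂ (HillFourBody.quadCoeff_pos μ)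
      (HillFourBody.constCoeff_pos ⟨hμ.1, hμ_lt⟩) (sub_pos.1 hDμ)
  · exact exists_biquadratic_eq_sq_of_discr_eq_zero ℂ (HillFourBody.quadCoeff_pos μ₀)
      (sub_eq_zero.1 hD)
  · have hDμ : HillFourBody.discr μ < 0 :=
      hD ▸ HillFourBody.discr_strictAntiOn hμ₀_le hμ.2 hμ.1
    exact exists_biquadratic_eq_mul_of_discr_neg ℂ (sub_neg.1 hDμ)
end
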